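/- Let x be a real number and let a, d be complex numbers with d ≠ 0, a + 1/2 ≠ 0, such that a/2, (a+1)/2 shifted denominators a+1/2, a+1, a+3/2 and d are not nonpositive integers or zero. Then e^{x²/4} · Σ_{k=0}^∞ (a/2)_k ((a+1)/2)_k (d+1)_k (−x²)^k / ((a+1/2)_k (a+1)_k (d)_k k!) = Σ_{k=0}^∞ (x/4)^{2k} H_{2k}(x/2) / ((a+1/2)_k k!) + ((1 − a/d)/(a+1/2)) · Σ_{k=0}^∞ (x/4)^{2k+1} H_{2k+1}(x/2) / ((a+3/2)_k k!). -/

import Mathlib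

/-- The Pochhammer symbol `(a)_k = a (a+1) ⋯ (a+k-1)`. -/
noncomputable def poch (a : ℂ) (k : ℕ) : ℂ := Polynomial.eval a (ascPochhammer ℂ k)

/-- The physicists' Hermite polynomial `H_n(t) = (-1)^n e^{t²} (d/dt)^n e^{-t²}`. -/
noncomputable def physHermite (n : ℕ) (t : ℝ) : ℝ :=
  (-1 : ℝ) ^ n * Real.exp (t ^ 2) * iteratedDeriv n (fun s => Real.exp (-(s ^ 2))) t

theorem sub_antidiag (f : ℕ × ℕ → ℂ) (hf : Summable f) :
    HasSum (fun n => ∑ ij ∈ Finset.HasAntidiagonal.antidiagonal n, f ij) (∑' ij, f ij) := by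
  have h := (Finset.HasAntidiagonal.sigmaAntidiagonalEquivProd (A := ℕ)).hasSum_iff.mpr hf.hasSum
  refine (h.sigma (fun n => hasSum_fintype _)).congr_fun ?_ 
  intro n
  rw [← Finset.sum_coe_sort]
  rfl

noncomputable def subU (y : ℂ) (p : ℕ) : ℂ := (-y / 2) ^ p / (Nat.factorial p : ℂ)

noncomputable def subV (y : ℂ) (q : ℕ) : ℂ :=
  if Even q then (-y / 4) ^ (q / 2) / (Nat.factorial (q / 2) : ℂ) else 0

noncomputable def subG (y : ℂ) (n : ℕ) : ℂ :=
  ∑ ij ∈ Finset.HasAntidiagonal.antidiagonal n, subU y ij.1 * subV y ij.2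

theorem subV_even (y : ℂ) (k : ℕ) : subV y (2 * k) = (-y / 4) ^ k / (Nat.factorial k : ℂ) := by
  simp [subV]

theorem subV_odd (y : ℂ) (k : ℕ) : subV y (2 * k + 1) = 0 := by
  simp [subV]

noncomputable def subM (m : ℕ → ℂ) : Polynomial ℂ →ₗ[ℂ] ℂ :=
  (Polynomial.basisMonomials ℂ).constr ℂ m

theorem subM_pow (m : ℕ → ℂ) (j : ℕ) : subM m (Polynomial.X ^ j) = m j := by
  have := (Polynomial.basisMonomials ℂ).constr_basis ℂ m j
  simpa [subM, Polynomial.X_pow_eq_monomial] using this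

noncomputable def subMu (m : ℕ → ℂ) (n : ℕ) : ℂ :=
  subM m ((2 * Polynomial.X - 1) ^ n)

theorem subMu_bound (m : ℕ → ℂ) (R : ℝ) (hm : ∀ j, ‖m j‖ ≤ R ^ j) (n : ℕ) :
    ‖subMu m n‖ ≤ (2 * R + 1) ^ n := by
  have e : ((2 * Polynomial.X - 1) ^ n : Polynomial ℂ) =
      ∑ j ∈ Finset.range (n + 1), ((2 : ℂ) ^ j * (-1) ^ (n - j) * (n.choose j : ℂ)) •
        (Polynomial.X ^ j : Polynomial ℂ) := by
    rw [sub_eq_add_neg, add_pow]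
    refine Finset.sum_congr rfl fun j _ => ?_
    rw [Polynomial.smul_eq_C_mul]
    simp only [map_mul, map_pow, map_neg, map_one, map_natCast, mul_pow]
    have : (Polynomial.C (2:ℂ)) = (2 : Polynomial ℂ) := rfl
    rw [this]; ring
  rw [subMu, e, map_sum, add_pow]
  refine (norm_sum_le _ _).trans (Finset.sum_le_sum fun j _ => ?_)
  rw [map_smul, subM_pow, smul_eq_mul]
  simp only [norm_mul, norm_pow, norm_neg, norm_one, one_pow, Complex.norm_natCast,
    Complex.norm_ofNat, mul_one, mul_pow]
  have := hm j
  calc _ = (2:ℝ)^j * (n.choose j) * ‖m j‖ := by ring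
    _ ≤ (2:ℝ)^j * (n.choose j) * R ^ j := by gcongr
    _ = _ := by ring

theorem sub_exp_expand (P Q : Polynomial ℂ) (N : ℕ) :
    ∑ ij ∈ Finset.HasAntidiagonal.antidiagonal N,
      ((Nat.factorial ij.1 : ℂ)⁻¹ * (Nat.factorial ij.2 : ℂ)⁻¹) • (P ^ ij.1 * Q ^ ij.2)
      = ((Nat.factorial N : ℂ)⁻¹) • (P + Q) ^ N := by
  rw [(Commute.all P Q).add_pow', Finset.smul_sum]
  refine Finset.sum_congr rfl fun ij h => ?_
  rw [Finset.HasAntidiagonal.mem_antidiagonal] at h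
  rw [← Nat.cast_smul_eq_nsmul ℂ, smul_smul]
  congr 1
  have h1 : (Nat.factorial ij.1 : ℂ) ≠ 0 := by exact_mod_cast Nat.factorial_ne_zero _
  have h2 : (Nat.factorial ij.2 : ℂ) ≠ 0 := by exact_mod_cast Nat.factorial_ne_zero _
  have h3 : (Nat.factorial N : ℂ) ≠ 0 := by exact_mod_cast Nat.factorial_ne_zero _
  have h4 : (N.choose ij.1 : ℂ) * Nat.factorial ij.1 * Nat.factorial ij.2 = Nat.factorial N := by
    rw [← h, Nat.choose_symm_add]
    exact_mod_cast Nat.add_choose_mul_factorial_mul_factorial ij.1 ij.2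
  field_simp
  rw [← h4]; ring

theorem sub_key (m : ℕ → ℂ) (y : ℂ) (N : ℕ) :
    ∑ ij ∈ Finset.HasAntidiagonal.antidiagonal N, subU y ij.1 * subV y (2 * ij.2) * subMu m (ij.1 + 2 * ij.2)
      = ∑ ij ∈ Finset.HasAntidiagonal.antidiagonal N, ((y / 4) ^ ij.1 / (Nat.factorial ij.1 : ℂ)) *
          (m (2 * ij.2) * (-y) ^ ij.2 / (Nat.factorial ij.2 : ℂ)) := by
  have h1 := congrArg (subM m) (sub_exp_expand ((-y / 2) • (2 * Polynomial.X - 1))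
    ((-y / 4) • (2 * Polynomial.X - 1) ^ 2) N)
  have h2 := congrArg (subM m) (sub_exp_expand ((y / 4) • 1)
    ((-y) • Polynomial.X ^ 2) N)
  have h3 : ((-y / 2) • (2 * Polynomial.X - 1) + (-y / 4) • (2 * Polynomial.X - 1) ^ 2
      : Polynomial ℂ) = (y / 4) • 1 + (-y) • Polynomial.X ^ 2 := by
    have e2 : (-y / 2) = (-y/4) * 2 := by ring
    have e1 : (-y) = (-y/4) * 4 := by ring
    have e3 : (y / 4) = - (-y/4) := by ring
    rw [e2, e3]
    nth_rewrite 4 [e1]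
    simp only [Polynomial.smul_eq_C_mul, map_mul, map_neg]
    have : (Polynomial.C (2:ℂ)) = (2 : Polynomial ℂ) := rfl
    have h4 : (Polynomial.C (4:ℂ)) = (4 : Polynomial ℂ) := rfl
    rw [this, h4]; ring
  rw [h3, ← h2, map_sum, map_sum] at h1
  convert h1 using 1
  · refine Finset.sum_congr rfl fun ij _ => ?_
    rw [smul_pow, smul_pow, smul_mul_smul_comm, ← pow_mul, ← pow_add, smul_smul, map_smul,
      subV_even, subU, smul_eq_mul, subMu]
    ring
  · refine Finset.sum_congr rfl fun ij _ => ?_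
    rw [smul_pow, smul_pow, smul_mul_smul_comm, ← pow_mul, one_pow, one_mul, smul_smul, map_smul,
      subM_pow, smul_eq_mul]
    ring

theorem sub_summable_U (y : ℂ) (Q : ℝ) : Summable fun p => ‖subU y p‖ * Q ^ p := by
  have := Real.summable_pow_div_factorial (‖-y / 2‖ * Q)
  refine this.congr fun p => ?_
  rw [subU, norm_div ((-y / 2) ^ p), norm_pow, Complex.norm_natCast, mul_pow]; ring

theorem sub_summable_V (y : ℂ) (Q : ℝ) : Summable fun q => ‖subV y q‖ * Q ^ q := by
  have hi : Function.Injective (fun k : ℕ => 2 * k) := fun a b h => by simpa using h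
  rw [← hi.summable_iff]
  · have := Real.summable_pow_div_factorial (‖-y / 4‖ * Q ^ 2)
    refine this.congr fun p => ?_
    simp only [Function.comp]
    rw [subV_even, norm_div ((-y / 4) ^ p), norm_pow, Complex.norm_natCast, mul_pow, pow_mul]; ring
  · intro q hq
    have : ¬ Even q := by
      rintro ⟨k, rfl⟩; exact hq ⟨k, by simp; ring⟩
    simp [subV, this]

theorem sub_main (m : ℕ → ℂ) (R : ℝ) (hm : ∀ j, ‖m j‖ ≤ R ^ j) (hR : 0 ≤ R) (y : ℂ) :
    HasSum (fun n => subMu m n * subG y n)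
      (Complex.exp (y / 4) * ∑' k : ℕ, m (2 * k) * (-y) ^ k / (Nat.factorial k : ℂ)) := by
  set f : ℕ × ℕ → ℂ := fun ij => subU y ij.1 * subV y ij.2 * subMu m (ij.1 + ij.2) with hf
  have hs : Summable f := by
    have h0 := (sub_summable_U y (2 * R + 1)).mul_of_nonneg (sub_summable_V y (2 * R + 1))
      (fun p => by positivity) (fun p => by positivity)
    refine Summable.of_norm_bounded h0 fun ij => ?_
    have := subMu_bound m R hm (ij.1 + ij.2)
    simp only [hf, norm_mul]
    calc _ ≤ ‖subU y ij.1‖ * ‖subV y ij.2‖ * (2 * R + 1) ^ (ij.1 + ij.2) := by gcongr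
      _ = _ := by rw [pow_add]; ring
  have h1 := sub_antidiag f hs
  have hi : Function.Injective (fun ij : ℕ × ℕ => (ij.1, 2 * ij.2)) := by
    rintro ⟨a, b⟩ ⟨c, d⟩ h; simp at h; simp [h]
  have hsupp : Function.support f ⊆ Set.range (fun ij : ℕ × ℕ => (ij.1, 2 * ij.2)) := by
    rintro ⟨p, q⟩ h
    rcases Nat.even_or_odd' q with ⟨k, rfl | rfl⟩
    · exact ⟨(p, k), rfl⟩
    · simp [hf, subV_odd] at h
  have h2 := hi.tsum_eq hsupp
  have hs2 := hs.comp_injective hi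
  have h3 := (sub_antidiag _ hs2).tsum_eq
  have h4 : ∑' ij, f ij = Complex.exp (y / 4) *
      ∑' k : ℕ, m (2 * k) * (-y) ^ k / (Nat.factorial k : ℂ) := by
    rw [← h2]
    refine h3.symm.trans ?_
    rw [Complex.exp_eq_exp_ℂ, NormedSpace.exp_eq_tsum_div]
    have n1 : Summable fun j : ℕ => ‖(y / 4) ^ j / (Nat.factorial j : ℂ)‖ := by
      refine (Real.summable_pow_div_factorial ‖y / 4‖).congr fun j => ?_
      rw [norm_div ((y / 4) ^ j), norm_pow, Complex.norm_natCast]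
    have n2 : Summable fun k : ℕ => ‖m (2 * k) * (-y) ^ k / (Nat.factorial k : ℂ)‖ := by
      refine Summable.of_nonneg_of_le (fun _ => norm_nonneg _) (fun k => ?_)
        (Real.summable_pow_div_factorial (R ^ 2 * ‖y‖))
      rw [norm_div, norm_mul, norm_pow, Complex.norm_natCast, norm_neg, mul_pow, ← pow_mul]
      have := hm (2 * k)
      gcongr
    rw [tsum_mul_tsum_eq_tsum_sum_antidiagonal_of_summable_norm n1 n2]
    refine tsum_congr fun N => ?_
    exact sub_key m y N
  rw [← h4]
  convert h1 using 2 with n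
  rw [subG, Finset.mul_sum]
  refine Finset.sum_congr rfl fun ij h => ?_
  rw [Finset.HasAntidiagonal.mem_antidiagonal] at h
  simp only [hf]
  rw [h]; ring

theorem subG_rec (y : ℂ) (n : ℕ) :
    ((n : ℂ) + 2) * subG y (n + 2) = (-y / 2) * subG y (n + 1) + (-y / 2) * subG y n := by
  set u : PowerSeries ℂ := PowerSeries.mk (subU y)
  set v : PowerSeries ℂ := PowerSeries.mk (subV y)
  have hg : ∀ n, PowerSeries.coeff n (u * v) = subG y n := fun n => by
    simp [PowerSeries.coeff_mul, u, v, subG]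
  have hu : PowerSeries.derivative ℂ u = PowerSeries.C (-y / 2) * u := by
    ext p
    simp only [PowerSeries.coeff_derivative, PowerSeries.coeff_C_mul, u, PowerSeries.coeff_mk,
      subU, Nat.factorial_succ, Nat.cast_mul]
    have h1 : (Nat.factorial p : ℂ) ≠ 0 := by exact_mod_cast Nat.factorial_ne_zero _
    have h2 : ((p + 1 : ℕ) : ℂ) ≠ 0 := Nat.cast_ne_zero.mpr (Nat.succ_ne_zero p)
    push_cast at h2 ⊢
    rw [pow_succ]
    field_simp
  have hv : PowerSeries.derivative ℂ v = PowerSeries.C (-y / 2) * (PowerSeries.X * v) := by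
    ext q
    rw [PowerSeries.coeff_derivative, PowerSeries.coeff_C_mul]
    rcases q with _ | q
    · simp [v, subV]
    · rw [PowerSeries.coeff_succ_X_mul]
      simp only [v, PowerSeries.coeff_mk]
      rcases Nat.even_or_odd' q with ⟨k, rfl | rfl⟩
      · rw [show 2 * k + 1 + 1 = 2 * (k + 1) by ring, subV_even, subV_even, Nat.factorial_succ]
        have h1 : (Nat.factorial k : ℂ) ≠ 0 := by exact_mod_cast Nat.factorial_ne_zero _
        have h2 : ((k + 1 : ℕ) : ℂ) ≠ 0 := Nat.cast_ne_zero.mpr (Nat.succ_ne_zero k)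
        push_cast at h2 ⊢
        field_simp
        ring
      · rw [show 2 * k + 1 + 1 + 1 = 2 * (k + 1) + 1 by ring, subV_odd, subV_odd]; simp
  have hd : PowerSeries.derivative ℂ (u * v) =
      PowerSeries.C (-y / 2) * (u * v) + PowerSeries.C (-y / 2) * (PowerSeries.X * (u * v)) := by
    rw [Derivation.leibniz, hu, hv]; simp only [smul_eq_mul]; ring
  have := congrArg (PowerSeries.coeff (n + 1)) hd
  rw [PowerSeries.coeff_derivative, map_add, PowerSeries.coeff_C_mul, PowerSeries.coeff_C_mul,
    PowerSeries.coeff_succ_X_mul, hg, hg, hg] at this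
  rw [← this]; push_cast; ring

theorem sub_gauss (n : ℕ) : ∀ t : ℝ,
    iteratedDeriv (n + 2) (fun s : ℝ => Real.exp (-(s ^ 2))) t =
      -2 * t * iteratedDeriv (n + 1) (fun s : ℝ => Real.exp (-(s ^ 2))) t
      - 2 * (n + 1) * iteratedDeriv n (fun s : ℝ => Real.exp (-(s ^ 2))) t := by
  set φ : ℝ → ℝ := fun s => Real.exp (-(s ^ 2)) with hφ
  have hc : ContDiff ℝ ⊤ φ := by simp only [hφ]; fun_prop
  have hD : ∀ k t, HasDerivAt (iteratedDeriv k φ) (iteratedDeriv (k + 1) φ t) t := fun k t => by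
    rw [iteratedDeriv_succ]
    exact ((hc.differentiable_iteratedDeriv k (by exact_mod_cast WithTop.coe_lt_top _)) t).hasDerivAt
  have h1 : ∀ t, iteratedDeriv 1 φ t = -2 * t * φ t := fun t => by
    rw [iteratedDeriv_one]
    have : HasDerivAt φ (Real.exp (-(t ^ 2)) * (-(2 * t))) t := by
      have := ((hasDerivAt_pow 2 t).neg).exp
      simpa using this
    rw [this.deriv]; simp only [hφ]; ring
  induction n with
  | zero =>
    intro t
    have e : iteratedDeriv 1 φ = fun t => -2 * t * φ t := funext h1
    have h2 := hD 1 t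
    have h3 : HasDerivAt (iteratedDeriv 1 φ) (-2 * φ t + -2 * t * iteratedDeriv 1 φ t) t := by
      have h0 := hD 0 t
      rw [iteratedDeriv_zero] at h0
      have := ((hasDerivAt_id t).const_mul (-2)).mul h0
      rw [e]
      have e' := h1 t
      simp only [zero_add, id] at this
      rw [e'] at this
      rw [mul_one] at this
      exact this
    have := h2.unique h3
    simp only [zero_add, iteratedDeriv_zero] at *
    rw [this]; push_cast; ring
  | succ n ih =>
    intro t
    have e := funext ih
    have h2 := hD (n + 2) t
    have h3 := (((hasDerivAt_id t).const_mul (-2)).mul (hD (n + 1) t)).sub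
      ((hD n t).const_mul (2 * ((n : ℝ) + 1)))
    have h4 := h2.unique (h3.congr_of_eventuallyEq (Filter.Eventually.of_forall ih))
    rw [h4]
    simp only [id]; push_cast; ring

theorem sub_herm_rec (n : ℕ) (t : ℝ) : physHermite (n + 2) t =
    2 * t * physHermite (n + 1) t - 2 * (n + 1) * physHermite n t := by
  simp only [physHermite, sub_gauss]; ring

theorem sub_herm (x : ℝ) (n : ℕ) : (Nat.factorial n : ℂ) * subG ((x : ℂ) ^ 2) n =
    (((-x / 2) ^ n * physHermite n (x / 2) : ℝ) : ℂ) := by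
  induction n using Nat.strong_induction_on with
  | _ n ih =>
    rcases n with _ | _ | n
    · have : Real.exp ((x/2) ^ 2) * Real.exp (-(x/2) ^ 2) = 1 := by
        rw [← Real.exp_add]; simp
      simp [subG, subU, subV, physHermite, iteratedDeriv_zero, ← Real.exp_add]
    · have : HasDerivAt (fun s : ℝ => Real.exp (-(s ^ 2)))
          (Real.exp (-((x/2) ^ 2)) * (-(2 * (x/2)))) (x/2) := by
        have := ((hasDerivAt_pow 2 (x/2)).neg).exp
        simpa using this
      have h2 : physHermite 1 (x/2) = x := by
        rw [physHermite, iteratedDeriv_one, this.deriv, ← mul_assoc, mul_assoc ((-1)^1),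
          ← Real.exp_add]
        simp; ring
      rw [zero_add, h2]
      simp [subG, subU, subV, Finset.HasAntidiagonal.antidiagonal]
      ring
    · have h0 := ih n (by omega)
      have h1 := ih (n + 1) (by omega)
      rw [sub_herm_rec]
      have hr := subG_rec ((x : ℂ) ^ 2) n
      rw [Nat.factorial_succ] at h1
      rw [show n + 1 + 1 = n + 2 by rfl, Nat.factorial_succ, Nat.factorial_succ]
      push_cast at h0 h1 ⊢
      linear_combination ((n : ℂ) + 1) * (Nat.factorial n : ℂ) * hr - (x : ℂ) ^ 2 / 2 * h1
        - ((n : ℂ) + 1) * (x : ℂ) ^ 2 / 2 * h0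

theorem sub_summable_m (m : ℕ → ℂ) (R : ℝ) (hm : ∀ j, ‖m j‖ ≤ R ^ j) (y : ℂ) :
    Summable fun k : ℕ => m (2 * k) * (-y) ^ k / (Nat.factorial k : ℂ) := by
  refine Summable.of_norm_bounded (Real.summable_pow_div_factorial (R ^ 2 * ‖y‖)) (fun k => ?_)
  rw [norm_div, norm_mul, norm_pow, Complex.norm_natCast, norm_neg, mul_pow, ← pow_mul]
  have := hm (2 * k)
  gcongr

theorem poch_zero' (a : ℂ) : poch a 0 = 1 := by simp [poch]

theorem poch_succ' (a : ℂ) (k : ℕ) : poch a (k + 1) = poch a k * (a + k) := by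
  simp [poch, ascPochhammer_succ_eval]

theorem poch_ne' (a : ℂ) (h : ∀ n : ℕ, a ≠ -(n : ℂ)) (k : ℕ) : poch a k ≠ 0 := by
  induction k with
  | zero => simp [poch_zero']
  | succ k ih =>
    rw [poch_succ']
    exact mul_ne_zero ih fun h0 => h k (eq_neg_of_add_eq_zero_left h0)

theorem poch_shift (a : ℂ) (k : ℕ) : a * poch (a + 1) k = poch a k * (a + k) := by
  induction k with
  | zero => simp [poch_zero']
  | succ k ih =>
    rw [poch_succ', poch_succ']
    push_cast
    linear_combination (a + 1 + k) * ih

theorem poch_shift' (a : ℂ) (k : ℕ) : a * poch (a + 1) k = poch a (k + 1) := by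
  rw [poch_shift, poch_succ']

theorem poch_dup (a : ℂ) (k : ℕ) :
    poch (a / 2) k * poch ((a + 1) / 2) k * 4 ^ k = poch a (2 * k) := by
  induction k with
  | zero => simp [poch_zero']
  | succ k ih =>
    rw [show 2 * (k + 1) = 2 * k + 1 + 1 by ring, poch_succ', poch_succ', poch_succ', poch_succ',
      ← ih]
    push_cast
    ring

theorem poch_half (k : ℕ) :
    poch (1 / 2) k * 4 ^ k * (Nat.factorial k : ℂ) = (Nat.factorial (2 * k) : ℂ) := by
  induction k with
  | zero => simp [poch_zero']
  | succ k ih =>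
    rw [show 2 * (k + 1) = 2 * k + 1 + 1 by ring, poch_succ', Nat.factorial_succ,
      Nat.factorial_succ, Nat.factorial_succ]
    push_cast
    rw [← ih]
    ring

noncomputable def subMom (b c : ℂ) (j : ℕ) : ℂ := poch b j / poch c j

theorem subMom_succ (b c : ℂ) (hc : ∀ n : ℕ, c ≠ -(n : ℂ)) (j : ℕ) :
    (c + j) * subMom b c (j + 1) = (b + j) * subMom b c j := by
  have h1 := poch_ne' c hc j
  have h2 : c + j ≠ 0 := fun h0 => hc j (eq_neg_of_add_eq_zero_left h0)
  simp only [subMom, poch_succ']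
  field_simp

theorem subMom_bound (b c : ℂ) :
    ∃ R : ℝ, 0 ≤ R ∧ ∀ j, ‖subMom b c j‖ ≤ R ^ j := by
  have ht := tendsto_add_mul_div_add_mul_atTop_nhds b c (1 : ℂ) (one_ne_zero)
  obtain ⟨R, hR⟩ := (Metric.isBounded_range_of_tendsto _ ht).exists_norm_le
  have hR' : ∀ j : ℕ, ‖(b + j) / (c + j)‖ ≤ R := fun j => by
    simpa using hR _ ⟨j, rfl⟩
  have h0 : 0 ≤ R := (norm_nonneg _).trans (hR' 0)
  refine ⟨R, h0, fun j => ?_⟩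
  induction j with
  | zero => simp [subMom, poch_zero']
  | succ j ih =>
    have : subMom b c (j + 1) = subMom b c j * ((b + j) / (c + j)) := by
      simp only [subMom, poch_succ', mul_div_mul_comm]
    rw [this, norm_mul, pow_succ]
    exact mul_le_mul ih (hR' j) (norm_nonneg _) (by positivity)

theorem sub_pearson (b c : ℂ) (hc : ∀ n : ℕ, c ≠ -(n : ℂ)) (p : Polynomial ℂ) :
    subM (subMom b c) (c • (Polynomial.X * p) - b • p
      + (Polynomial.X ^ 2 - Polynomial.X) * Polynomial.derivative p) = 0 := by
  induction p using Polynomial.induction_on' with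
  | add p q hp hq =>
    rw [← add_zero (0 : ℂ)]
    nth_rewrite 1 [← hp]
    rw [← hq, ← map_add]
    congr 1
    simp only [mul_add, smul_add, map_add]
    ring
  | monomial n r =>
    have e : (c • (Polynomial.X * Polynomial.monomial n r) - b • Polynomial.monomial n r
      + (Polynomial.X ^ 2 - Polynomial.X) * Polynomial.derivative (Polynomial.monomial n r)
        : Polynomial ℂ) = (r * (c + n)) • Polynomial.X ^ (n + 1)
          - (r * (b + n)) • Polynomial.X ^ n := by
      rw [← Polynomial.C_mul_X_pow_eq_monomial, Polynomial.derivative_C_mul_X_pow]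
      simp only [Polynomial.smul_eq_C_mul, map_mul, map_add, map_natCast]
      rcases n with _ | n
      · simp; ring
      · simp only [Nat.add_sub_cancel]; ring
    rw [e, map_sub, map_smul, map_smul, subM_pow, subM_pow, smul_eq_mul, smul_eq_mul]
    linear_combination r * subMom_succ b c hc n

theorem subMu_zero (b c : ℂ) : subMu (subMom b c) 0 = 1 := by
  have := subM_pow (subMom b c) 0
  rw [subMu, pow_zero, ← pow_zero Polynomial.X, this]
  simp [subMom, poch_zero']

theorem subMu_one (b c : ℂ) (hc : ∀ n : ℕ, c ≠ -(n : ℂ)) :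
    c * subMu (subMom b c) 1 = 2 * b - c := by
  have h := sub_pearson b c hc 1
  have e : (c • (Polynomial.X * 1) - b • 1
      + (Polynomial.X ^ 2 - Polynomial.X) * Polynomial.derivative 1 : Polynomial ℂ)
      = (c / 2) • (2 * Polynomial.X - 1) ^ 1 + (c / 2 - b) • (2 * Polynomial.X - 1) ^ 0 := by
    obtain ⟨k, rfl⟩ : ∃ k, c = k * 2 := ⟨c / 2, by ring⟩
    rw [mul_div_cancel_right₀ _ two_ne_zero]
    simp only [Polynomial.smul_eq_C_mul, map_mul, map_sub, Polynomial.derivative_one]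
    have : (Polynomial.C (2:ℂ)) = (2 : Polynomial ℂ) := rfl
    rw [this]; ring
  rw [e, map_add, map_smul, map_smul] at h
  have h0 := subMu_zero b c
  simp only [subMu, smul_eq_mul] at h h0 ⊢
  rw [h0] at h
  linear_combination 2 * h

theorem subMu_rec (b c : ℂ) (hc : ∀ n : ℕ, c ≠ -(n : ℂ)) (n : ℕ) :
    (c + n + 1) * subMu (subMom b c) (n + 2) = (2 * b - c) * subMu (subMom b c) (n + 1)
      + (n + 1) * subMu (subMom b c) n := by
  have h := sub_pearson b c hc ((2 * Polynomial.X - 1) ^ (n + 1))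
  have e : (c • (Polynomial.X * (2 * Polynomial.X - 1) ^ (n + 1))
      - b • (2 * Polynomial.X - 1) ^ (n + 1)
      + (Polynomial.X ^ 2 - Polynomial.X) *
        Polynomial.derivative ((2 * Polynomial.X - 1) ^ (n + 1)) : Polynomial ℂ)
      = (c / 2 + (n + 1) / 2) • (2 * Polynomial.X - 1) ^ (n + 2)
        + (c / 2 - b) • (2 * Polynomial.X - 1) ^ (n + 1)
        - (((n : ℂ) + 1) / 2) • (2 * Polynomial.X - 1) ^ n := by
    have hder : Polynomial.derivative ((2 * Polynomial.X - 1) ^ (n + 1) : Polynomial ℂ)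
        = ((n : Polynomial ℂ) + 1) * (2 * Polynomial.X - 1) ^ n * 2 := by
      rw [Polynomial.derivative_pow]
      simp
    rw [hder]
    have e1 : c = (c / 2) * 2 := by ring
    have e2 : (n : Polynomial ℂ) + 1 = Polynomial.C (((n : ℂ) + 1) / 2) * 2 := by
      have : (2 : Polynomial ℂ) = Polynomial.C (2 : ℂ) := rfl
      rw [this, ← map_mul, div_mul_cancel₀ _ two_ne_zero]; simp
    rw [e2]
    nth_rewrite 1 [e1]
    simp only [Polynomial.smul_eq_C_mul, map_mul, map_sub, map_add]
    have : (Polynomial.C (2:ℂ)) = (2 : Polynomial ℂ) := rfl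
    rw [this]; ring
  rw [e, map_sub, map_add, map_smul, map_smul, map_smul] at h
  simp only [subMu, smul_eq_mul] at h ⊢
  linear_combination 2 * h

theorem subMu_closed (a b e : ℂ) (he : 2 * b - (2 * a + 1) = e) (he2 : e ^ 2 = 1)
    (hc : ∀ n : ℕ, 2 * a + 1 ≠ -(n : ℂ)) (h1 : ∀ n : ℕ, a + 1 / 2 ≠ -(n : ℂ))
    (h2 : ∀ n : ℕ, a + 1 ≠ -(n : ℂ)) (k : ℕ) :
    subMu (subMom b (2 * a + 1)) (2 * k) = poch (1 / 2) k / poch (a + 1 / 2) k ∧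
    subMu (subMom b (2 * a + 1)) (2 * k + 1) =
      e * (poch (1 / 2) (k + 1) / poch (a + 1 / 2) (k + 1)) := by
  have n1 : ∀ k : ℕ, a + 1 / 2 + k ≠ 0 := fun k h0 => h1 k (eq_neg_of_add_eq_zero_left h0)
  have n2 : ∀ k : ℕ, a + 1 + k ≠ 0 := fun k h0 => h2 k (eq_neg_of_add_eq_zero_left h0)
  set μ := subMu (subMom b (2 * a + 1)) with hμ
  have n3 : ∀ k : ℕ, 2 * a + 1 + 2 * k ≠ 0 := fun k h0 => n1 k (by linear_combination h0 / 2)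
  have even_of : ∀ k : ℕ, (2 * a + 1 + 2 * k) * μ (2 * k + 1) = e * (2 * k + 1) * μ (2 * k) →
      (2 * a + 1 + 2 * k) * μ (2 * k + 2) = (2 * k + 1) * μ (2 * k) := by
    intro k h
    have r := subMu_rec b (2 * a + 1) hc (2 * k)
    rw [he, ← hμ] at r
    push_cast at r
    apply mul_left_cancel₀ (mul_ne_zero two_ne_zero (n2 k))
    linear_combination (2 * a + 1 + 2 * k) * r + e * h + (2 * k + 1) * μ (2 * k) * he2
  have hodd : ∀ k : ℕ, (2 * a + 1 + 2 * k) * μ (2 * k + 1) = e * (2 * k + 1) * μ (2 * k) := by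
    intro k
    induction k with
    | zero =>
      have r := subMu_one b (2 * a + 1) hc
      have r0 := subMu_zero b (2 * a + 1)
      rw [← hμ] at r r0
      simp only [mul_zero, zero_add, r0, Nat.cast_zero, add_zero]
      rw [r, he]; ring
    | succ k ih =>
      have h := even_of k ih
      have h3 : μ (2 * k + 1) = e * μ (2 * k + 2) := by
        apply mul_left_cancel₀ (n3 k)
        linear_combination ih - e * h
      have r := subMu_rec b (2 * a + 1) hc (2 * k + 1)
      rw [he, ← hμ] at r
      rw [show 2 * (k + 1) + 1 = 2 * k + 1 + 2 by ring, show 2 * (k + 1) = 2 * k + 1 + 1 by ring]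
      rw [show 2 * k + 1 + 1 = 2 * k + 2 by ring] at r ⊢
      push_cast at r ⊢
      linear_combination r + (2 * k + 2) * h3
  have heven : ∀ k : ℕ, μ (2 * k) = poch (1 / 2) k / poch (a + 1 / 2) k := by
    intro k
    induction k with
    | zero =>
      have r0 := subMu_zero b (2 * a + 1)
      simpa [poch_zero'] using r0
    | succ k ih =>
      have h := even_of k (hodd k)
      rw [ih] at h
      rw [show 2 * (k + 1) = 2 * k + 2 by ring, poch_succ', poch_succ', mul_div_mul_comm]
      apply mul_left_cancel₀ (n3 k)
      rw [h]
      have e2 : (1 / 2 + (k : ℂ)) = (2 * k + 1) / 2 := by ring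
      have e3 : (a + 1 / 2 + (k : ℂ)) = (2 * a + 1 + 2 * k) / 2 := by ring
      have := n3 k
      rw [e2, e3]
      field_simp
  refine ⟨heven k, ?_⟩
  have h := hodd k
  rw [heven k] at h
  rw [poch_succ', poch_succ', mul_div_mul_comm]
  apply mul_left_cancel₀ (n3 k)
  rw [h]
  have e2 : (1 / 2 + (k : ℂ)) = (2 * k + 1) / 2 := by ring
  have e3 : (a + 1 / 2 + (k : ℂ)) = (2 * a + 1 + 2 * k) / 2 := by ring
  have := n3 k
  rw [e2, e3]
  field_simp

theorem sub_final (x : ℝ) (a b e : ℂ) (he : 2 * b - (2 * a + 1) = e) (he2 : e ^ 2 = 1)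
    (hc : ∀ n : ℕ, 2 * a + 1 ≠ -(n : ℂ)) (h1 : ∀ n : ℕ, a + 1 / 2 ≠ -(n : ℂ))
    (h2 : ∀ n : ℕ, a + 1 ≠ -(n : ℂ)) (h3 : ∀ n : ℕ, a + 3 / 2 ≠ -(n : ℂ)) :
    Complex.exp ((x : ℂ) ^ 2 / 4) * ∑' k : ℕ, subMom b (2 * a + 1) (2 * k) *
        (-(x : ℂ) ^ 2) ^ k / (Nat.factorial k : ℂ)
      = (∑' k : ℕ, (((x / 4) ^ (2 * k) * physHermite (2 * k) (x / 2) : ℝ) : ℂ) /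
            (poch (a + 1 / 2) k * (Nat.factorial k : ℂ)))
        - (e / (a + 1 / 2)) *
          ∑' k : ℕ, (((x / 4) ^ (2 * k + 1) * physHermite (2 * k + 1) (x / 2) : ℝ) : ℂ) /
            (poch (a + 3 / 2) k * (Nat.factorial k : ℂ)) := by
  obtain ⟨R, hR, hm⟩ := subMom_bound b (2 * a + 1)
  have H := sub_main _ R hm hR ((x : ℂ) ^ 2)
  have hs := H.summable
  have i1 : Function.Injective (fun k : ℕ => 2 * k) := fun a b h => by simpa using h
  have i2 : Function.Injective (fun k : ℕ => 2 * k + 1) := fun a b h => by simpa using h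
  have T := tsum_even_add_odd
    (f := fun n => subMu (subMom b (2 * a + 1)) n * subG ((x : ℂ) ^ 2) n)
    (hs.comp_injective i1) (hs.comp_injective i2)
  refine H.tsum_eq.symm.trans (T.symm.trans ?_)
  rw [sub_eq_add_neg, ← neg_mul, ← tsum_mul_left]
  have fne : ∀ k : ℕ, (Nat.factorial k : ℂ) ≠ 0 := fun k =>
    Nat.cast_ne_zero.mpr (Nat.factorial_ne_zero k)
  have a0 : a + 1 / 2 ≠ 0 := by simpa using h1 0
  congr 1
  · refine tsum_congr fun k => ?_
    have hg := sub_herm x (2 * k)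
    have hp := poch_half k
    have p1 := poch_ne' _ h1 k
    have f1 := fne k
    have f2 := fne (2 * k)
    have hG : subG ((x : ℂ) ^ 2) (2 * k) =
        (((-x / 2) ^ (2 * k) * physHermite (2 * k) (x / 2) : ℝ) : ℂ)
          / (Nat.factorial (2 * k) : ℂ) := by rw [← hg]; field_simp
    rw [(subMu_closed a b e he he2 hc h1 h2 k).1, hG, ← hp]
    have p2 : poch (1 / 2) k ≠ 0 := by
      intro h0; rw [h0] at hp; apply f2; rw [← hp]; simp
    have ex : (-x / 2) ^ (2 * k) = 4 ^ k * (x / 4) ^ (2 * k) := by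
      rw [pow_mul, pow_mul, ← mul_pow]; congr 1; ring
    rw [ex]
    push_cast
    field_simp
  · refine tsum_congr fun k => ?_
    have hg := sub_herm x (2 * k + 1)
    have hp := poch_half k
    have p1 := poch_ne' _ h3 k
    have f1 := fne k
    have f2 := fne (2 * k)
    have k1 : (2 * (k : ℂ) + 1) ≠ 0 := by exact_mod_cast Nat.succ_ne_zero (2 * k)
    have f3 : (Nat.factorial (2 * k + 1) : ℂ) ≠ 0 := fne _
    have hG : subG ((x : ℂ) ^ 2) (2 * k + 1) =
        (((-x / 2) ^ (2 * k + 1) * physHermite (2 * k + 1) (x / 2) : ℝ) : ℂ)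
          / (Nat.factorial (2 * k + 1) : ℂ) := by rw [← hg]; field_simp
    have p2 : poch (1 / 2) k ≠ 0 := by
      intro h0; rw [h0] at hp; apply f2; rw [← hp]; simp
    rw [(subMu_closed a b e he he2 hc h1 h2 k).2, hG, Nat.factorial_succ, Nat.cast_mul, ← hp,
      ← poch_shift' (a + 1 / 2), show a + 1 / 2 + 1 = a + 3 / 2 by ring, poch_succ']
    have ex : (-x / 2) ^ (2 * k + 1) = - 2 * 4 ^ k * (x / 4) ^ (2 * k + 1) := by
      rw [pow_succ, pow_succ, pow_mul, pow_mul,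
        show (-x / 2) ^ 2 = 4 * (x / 4) ^ 2 by ring, mul_pow]; ring
    rw [ex]
    have e2 : (1 / 2 + (k : ℂ)) = (2 * k + 1) / 2 := by ring
    rw [e2]
    push_cast
    generalize poch (a + 3 / 2) k = w1 at *
    generalize poch (1 / 2) k = w2 at *
    generalize a + 1 / 2 = a' at *
    generalize (physHermite (2 * k + 1) (x / 2) : ℂ) = w3
    generalize ((x : ℂ) / 4) ^ (2 * k + 1) = w4
    field_simp

/-- Example (d) of the paper:
`e^{x²/4} ₃F₃(a/2, (a+1)/2, d+1; a+1/2, a+1, d; -x²)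
  = Σ_k (x/4)^{2k} H_{2k}(x/2)/((a+1/2)_k k!)
    + ((1-a/d)/(a+1/2)) Σ_k (x/4)^{2k+1} H_{2k+1}(x/2)/((a+3/2)_k k!)`. -/
theorem example_hermite
    (x : ℝ) (a d : ℂ)
    (hd0 : d ≠ 0)
    (ha120 : a + 1 / 2 ≠ 0)
    (ha2 : ∀ n : ℕ, a / 2 ≠ -(n : ℂ))
    (ha12n : ∀ n : ℕ, (a + 1) / 2 ≠ -(n : ℂ))
    (ha1 : ∀ n : ℕ, a + 1 / 2 ≠ -(n : ℂ))
    (hap1 : ∀ n : ℕ, a + 1 ≠ -(n : ℂ))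
    (ha3 : ∀ n : ℕ, a + 3 / 2 ≠ -(n : ℂ))
    (hd : ∀ n : ℕ, d ≠ -(n : ℂ)) :
    Complex.exp ((x : ℂ) ^ 2 / 4) *
        ∑' k : ℕ, poch (a / 2) k * poch ((a + 1) / 2) k * poch (d + 1) k *
          (-(x : ℂ) ^ 2) ^ k /
          (poch (a + 1 / 2) k * poch (a + 1) k * poch d k * (Nat.factorial k : ℂ))
      = (∑' k : ℕ, (((x / 4) ^ (2 * k) * physHermite (2 * k) (x / 2) : ℝ) : ℂ) /
            (poch (a + 1 / 2) k * (Nat.factorial k : ℂ)))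
        + ((1 - a / d) / (a + 1 / 2)) *
          ∑' k : ℕ, (((x / 4) ^ (2 * k + 1) * physHermite (2 * k + 1) (x / 2) : ℝ) : ℂ) /
            (poch (a + 3 / 2) k * (Nat.factorial k : ℂ)) := by
  have hc : ∀ n : ℕ, 2 * a + 1 ≠ -(n : ℂ) := by
    intro n h
    rcases Nat.even_or_odd' n with ⟨k, rfl | rfl⟩
    · apply ha1 k; push_cast at h; linear_combination h / 2
    · apply hap1 k; push_cast at h; linear_combination h / 2
  have F1 := sub_final x a a (-1) (by ring) (by ring) hc ha1 hap1 ha3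
  have F2 := sub_final x a (a + 1) 1 (by ring) (by ring) hc ha1 hap1 ha3
  obtain ⟨R1, -, hm1⟩ := subMom_bound a (2 * a + 1)
  obtain ⟨R2, -, hm2⟩ := subMom_bound (a + 1) (2 * a + 1)
  have s1 := sub_summable_m _ R1 hm1 ((x : ℂ) ^ 2)
  have s2 := sub_summable_m _ R2 hm2 ((x : ℂ) ^ 2)
  have key : ∀ k : ℕ, poch (a / 2) k * poch ((a + 1) / 2) k * poch (d + 1) k *
          (-(x : ℂ) ^ 2) ^ k /
          (poch (a + 1 / 2) k * poch (a + 1) k * poch d k * (Nat.factorial k : ℂ))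
      = (1 - a / (2 * d)) * (subMom a (2 * a + 1) (2 * k) *
        (-(x : ℂ) ^ 2) ^ k / (Nat.factorial k : ℂ)) + (a / (2 * d)) *
        (subMom (a + 1) (2 * a + 1) (2 * k) * (-(x : ℂ) ^ 2) ^ k / (Nat.factorial k : ℂ)) := by
    intro k
    have d1 := poch_dup a k
    have d2 := poch_dup (2 * a + 1) k
    rw [show (2 * a + 1) / 2 = a + 1 / 2 by ring, show (2 * a + 1 + 1) / 2 = a + 1 by ring] at d2
    have d3 := poch_shift a (2 * k)
    have d4 := poch_shift d k
    have q1 := poch_ne' _ ha1 k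
    have q2 := poch_ne' _ hap1 k
    have q3 := poch_ne' _ hd k
    have d5 : poch (d + 1) k = poch d k * (d + k) / d := by rw [← d4]; field_simp
    have d6 : a / (2 * d) * (subMom (a + 1) (2 * a + 1) (2 * k) *
        (-(x : ℂ) ^ 2) ^ k / (Nat.factorial k : ℂ)) = (a + 2 * k) / (2 * d) *
        (subMom a (2 * a + 1) (2 * k) * (-(x : ℂ) ^ 2) ^ k / (Nat.factorial k : ℂ)) := by
      push_cast at d3
      simp only [subMom]
      linear_combination (1 / (2 * d) / poch (2 * a + 1) (2 * k) * (-(x : ℂ) ^ 2) ^ k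
        / (Nat.factorial k : ℂ)) * d3
    have f1 : (Nat.factorial k : ℂ) ≠ 0 := Nat.cast_ne_zero.mpr (Nat.factorial_ne_zero k)
    have f4 : (4 : ℂ) ^ k ≠ 0 := pow_ne_zero _ (by norm_num)
    rw [d6, d5, subMom, ← d1, ← d2]
    generalize poch (a + 1 / 2) k = w1 at *
    generalize poch (a + 1) k = w2 at *
    generalize poch d k = w3 at *
    generalize poch (a / 2) k = w4 at *
    generalize poch ((a + 1) / 2) k = w5 at *
    generalize (-(x : ℂ) ^ 2) ^ k = w6 at *
    field_simp
    ring
  rw [tsum_congr key, (s1.mul_left _).tsum_add (s2.mul_left _), tsum_mul_left, tsum_mul_left]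
  rw [mul_add, mul_left_comm, F1, mul_left_comm, F2]
  generalize a + 1 / 2 = a' at *
  field_simp
  ring
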